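/- arXiv:2307.13126 — 3 statements merged into one kernel-verified Lean document; each statement's English description precedes it below -/
import Mathlib

section
/- Let R = Q[x_1,x_2,x_3,x_4] and let I be the ideal generated by x_1 x_4, x_1^2, x_3 x_4^2, x_2 x_4^2, x_2^2 x_4, x_1 x_3^2, x_1 x_2^2 − x_3^2 x_4, x_3^4, x_2 x_3^3 − x_4^4, x_2^2 x_3^2, x_2^4. Then A = R/I is a standard graded Artinian algebra that fails the Weak Lefschetz Property: for every linear form l ∈ A_1 there is some i ≥ 0 such that the multiplication map ·l : A_i → A_{i+1} is neither injective nor surjective. -/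
/-!
Write `a, b, c, d` for the four variables. The Hilbert function of `A` is `1, 4, 8, 8, 4, 1`, so
failure of the WLP is to be found at `A_2 → A_3`. For `l = p a + q b + r c + s d`, multiplication
by `l` sends the four quadrics `ab, ac, bd, cd` into the span of the three cubics `ab², abc, bcd`,
so it has a kernel on `A_2`, containing
`k = q r² ab - r³ ac + q³ bd - q² r cd` (and `ab` when `q = r = 0`).

The top piece `A_5` is spanned by `ab³c = bc³d = d⁵`, and the linear functional `socle` reading off
the coefficients of these monomials vanishes on the ideal, so that `ab³c` is nonzero in `A`
(`eq_zero_of_C_mul_mem`). Now `k b³ = -r³ ab³c` and `k c³ = q³ bc³d` (and `ab · b²c = ab³c`), hence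
`k y ≠ 0` for some cubic `y`. This shows `k ≠ 0`, and also that `y` is not of the form `l x`, because
`k l x = 0`.

Finally `A` is Artinian because `a², b⁴, c⁴, d⁶` are in the ideal.
-/

open MvPolynomial

/-- The degree-`d` graded piece of the quotient `R ⧸ I`. -/
noncomputable def quotPiece {K : Type} [Field K] {σ : Type}
    (I : Ideal (MvPolynomial σ K)) (d : ℕ) : Submodule K (MvPolynomial σ K ⧸ I) :=
  (MvPolynomial.homogeneousSubmodule σ K d).map (Ideal.Quotient.mkₐ K I).toLinearMap

/-- The second ideal of Abdallah et al.;
here `X 0, X 1, X 2, X 3` stand for `x_1, x_2, x_3, x_4`. -/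
noncomputable def abdallahIdeal₂ : Ideal (MvPolynomial (Fin 4) ℚ) :=
  Ideal.span
    {X 0 * X 3, X 0 ^ 2, X 2 * X 3 ^ 2, X 1 * X 3 ^ 2, X 1 ^ 2 * X 3,
     X 0 * X 2 ^ 2, X 0 * X 1 ^ 2 - X 2 ^ 2 * X 3, X 2 ^ 4,
     X 1 * X 2 ^ 3 - X 3 ^ 4, X 1 ^ 2 * X 2 ^ 2, X 1 ^ 4}

/-! ### The socle functional -/

/-- The exponent vector of the monomial `x_1 ^ i * x_2 ^ j * x_3 ^ k * x_4 ^ m`. -/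
noncomputable def expo (i j k m : ℕ) : Fin 4 →₀ ℕ :=
  Finsupp.equivFunOnFinite.symm ![i, j, k, m]

lemma monomial_expo (i j k m : ℕ) :
    (monomial (expo i j k m) 1 : MvPolynomial (Fin 4) ℚ)
      = X 0 ^ i * X 1 ^ j * X 2 ^ k * X 3 ^ m := by
  rw [monomial_eq, Finsupp.prod_fintype _ _ (by simp)]
  simp [Fin.prod_univ_four, expo]

lemma expo_le (i j k m i' j' k' m' : ℕ) :
    expo i j k m ≤ expo i' j' k' m' ↔ i ≤ i' ∧ j ≤ j' ∧ k ≤ k' ∧ m ≤ m' := by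
  simp [Finsupp.le_def, Fin.forall_fin_succ, expo]

lemma expo_sub (i j k m i' j' k' m' : ℕ) :
    expo i j k m - expo i' j' k' m' = expo (i - i') (j - j') (k - k') (m - m') := by
  ext t
  fin_cases t <;> simp [expo]

/-- The sum of the coefficients of `x_1 x_2³ x_3`, `x_2 x_3³ x_4` and `x_4⁵`; on degree `5` it is
the functional with kernel the degree-`5` part of the ideal. -/
noncomputable def socle (f : MvPolynomial (Fin 4) ℚ) : ℚ :=
  coeff (expo 1 3 1 0) f + coeff (expo 0 1 3 1) f + coeff (expo 0 0 0 5) f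

lemma socle_add (f g : MvPolynomial (Fin 4) ℚ) : socle (f + g) = socle f + socle g := by
  simp only [socle, coeff_add]; ring

lemma socle_sub (f g : MvPolynomial (Fin 4) ℚ) : socle (f - g) = socle f - socle g := by
  simp only [socle, coeff_sub]; ring

/-- The effect of multiplying by a monomial: every generator of the ideal is a monomial or a
difference of two monomials, so this decides whether `socle` kills its multiples. -/
lemma socle_mul_monomial (f : MvPolynomial (Fin 4) ℚ) (i j k m : ℕ) :
    socle (f * (X 0 ^ i * X 1 ^ j * X 2 ^ k * X 3 ^ m)) =
      (if i ≤ 1 ∧ j ≤ 3 ∧ k ≤ 1 ∧ m ≤ 0 then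
        coeff (expo (1 - i) (3 - j) (1 - k) (0 - m)) f else 0) +
      (if i ≤ 0 ∧ j ≤ 1 ∧ k ≤ 3 ∧ m ≤ 1 then
        coeff (expo (0 - i) (1 - j) (3 - k) (1 - m)) f else 0) +
      (if i ≤ 0 ∧ j ≤ 0 ∧ k ≤ 0 ∧ m ≤ 5 then
        coeff (expo (0 - i) (0 - j) (0 - k) (5 - m)) f else 0) := by
  rw [← monomial_expo]
  simp only [socle, coeff_mul_monomial', expo_le, expo_sub, mul_one]

lemma socle_eq_zero_of_mem {f : MvPolynomial (Fin 4) ℚ} (hf : f ∈ abdallahIdeal₂) :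
    socle f = 0 := by
  refine Submodule.span_induction (p := fun f _ => ∀ g, socle (g * f) = 0) ?_ ?_ ?_ ?_ hf 1
    |> fun h => by simpa using h
  · intro x hx g
    simp only [Set.mem_insert_iff, Set.mem_singleton_iff] at hx
    rcases hx with h | h | h | h | h | h | h | h | h | h | h <;> subst h
    · simpa using socle_mul_monomial g 1 0 0 1
    · simpa using socle_mul_monomial g 2 0 0 0
    · simpa using socle_mul_monomial g 0 0 1 2
    · simpa using socle_mul_monomial g 0 1 0 2
    · simpa using socle_mul_monomial g 0 2 0 1
    · simpa using socle_mul_monomial g 1 0 2 0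
    · have h1 := socle_mul_monomial g 1 2 0 0
      have h2 := socle_mul_monomial g 0 0 2 1
      simp at h1 h2
      rw [mul_sub, socle_sub, h1, h2, sub_self]
    · simpa using socle_mul_monomial g 0 0 4 0
    · have h1 := socle_mul_monomial g 0 1 3 0
      have h2 := socle_mul_monomial g 0 0 0 4
      simp at h1 h2
      rw [mul_sub, socle_sub, h1, h2, sub_self]
    · simpa using socle_mul_monomial g 0 2 2 0
    · simpa using socle_mul_monomial g 0 4 0 0
  · intro g
    simp [socle]
  · intro x y _ _ hx hy g
    rw [mul_add, socle_add, hx, hy, add_zero]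
  · intro c x _ hx g
    rw [smul_eq_mul, ← mul_assoc]
    exact hx _

lemma eq_zero_of_C_mul_mem {t : ℚ}
    (h : C t * (X 0 * X 1 ^ 3 * X 2) ∈ abdallahIdeal₂) : t = 0 := by
  have h0 := socle_eq_zero_of_mem h
  have h1 := socle_mul_monomial (C t) 1 3 1 0
  have e : (0 : Fin 4 →₀ ℕ) = expo 0 0 0 0 := by
    ext t; fin_cases t <;> simp [expo]
  simp [coeff_C, e] at h1
  rw [← h1, h0]

/-! ### Relations in the quotient -/

local notation "π" => Ideal.Quotient.mk abdallahIdeal₂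

/-- Nine of the defining relations, read in the quotient, and the further relation
`x_4⁶ = x_2 x_3³ x_4² = 0`. -/
lemma relations :
    π (X 0) * π (X 3) = 0 ∧ π (X 0) ^ 2 = 0 ∧ π (X 2) * π (X 3) ^ 2 = 0 ∧
    π (X 1) * π (X 3) ^ 2 = 0 ∧ π (X 1) ^ 2 * π (X 3) = 0 ∧ π (X 0) * π (X 2) ^ 2 = 0 ∧
    π (X 0) * π (X 1) ^ 2 - π (X 2) ^ 2 * π (X 3) = 0 ∧ π (X 2) ^ 4 = 0 ∧
    π (X 1) ^ 4 = 0 ∧ π (X 3) ^ 6 = 0 := by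
  have key : ∀ f ∈ ({X 0 * X 3, X 0 ^ 2, X 2 * X 3 ^ 2, X 1 * X 3 ^ 2, X 1 ^ 2 * X 3,
     X 0 * X 2 ^ 2, X 0 * X 1 ^ 2 - X 2 ^ 2 * X 3, X 2 ^ 4,
     X 1 * X 2 ^ 3 - X 3 ^ 4, X 1 ^ 2 * X 2 ^ 2, X 1 ^ 4} : Set (MvPolynomial (Fin 4) ℚ)),
      π f = 0 := fun f hf => Ideal.Quotient.eq_zero_iff_mem.2 (Ideal.subset_span hf)
  simp only [Set.mem_insert_iff, Set.mem_singleton_iff, forall_eq_or_imp, forall_eq,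
    map_mul, map_sub, map_pow] at key
  obtain ⟨h1, h2, h3, h4, h5, h6, h7, h8, h9, _, h11⟩ := key
  refine ⟨h1, h2, h3, h4, h5, h6, h7, h8, h11, ?_⟩
  linear_combination π (X 2) ^ 3 * h4 - π (X 3) ^ 2 * h9

lemma mk_mem_quotPiece {f : MvPolynomial (Fin 4) ℚ} {n : ℕ} (hf : f.IsHomogeneous n) :
    π f ∈ quotPiece abdallahIdeal₂ n :=
  ⟨f, hf, rfl⟩

/-! ### Finite length -/

/-- A monomial of degree at least `13 = 1 + 3 + 3 + 5 + 1` is divisible by one of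
`x_1², x_2⁴, x_3⁴, x_4⁶`. -/
lemma quotPiece_eq_bot {i : ℕ} (hi : 13 ≤ i) : quotPiece abdallahIdeal₂ i = ⊥ := by
  obtain ⟨-, h0, -, -, -, -, -, h2, h1, h3⟩ := relations
  rw [eq_bot_iff]
  rintro _ ⟨f, hf, rfl⟩
  change π f = 0
  rw [f.as_sum, map_sum]
  refine Finset.sum_eq_zero fun v hv => ?_
  have hdeg : v 0 + v 1 + v 2 + v 3 = i := by
    have := (mem_homogeneousSubmodule i f).1 hf (mem_support_iff.1 hv)
    rw [← this, Finsupp.weight_apply, Finsupp.sum_fintype _ _ (by simp)]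
    simp [Fin.sum_univ_four]
  rw [monomial_eq, Finsupp.prod_fintype _ _ (by simp), Fin.prod_univ_four]
  simp only [map_mul, map_pow]
  rcases (by omega : 2 ≤ v 0 ∨ 4 ≤ v 1 ∨ 4 ≤ v 2 ∨ 6 ≤ v 3) with h | h | h | h
  · rw [pow_eq_zero_of_le h h0]; ring
  · rw [pow_eq_zero_of_le h h1]; ring
  · rw [pow_eq_zero_of_le h h2]; ring
  · rw [pow_eq_zero_of_le h h3]; ring

/-! ### Failure in degree two -/

/-- A kernel element `k` with `k y ≠ 0` obstructs injectivity and surjectivity at once: `k ≠ 0`, and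
`y = l x` would give `k y = k l x = 0`. -/
lemma fails_of_witness {l k y : MvPolynomial (Fin 4) ℚ} (hk : k.IsHomogeneous 2)
    (hy : y.IsHomogeneous 3) (hlk : π l * π k = 0) (hky : π k * π y ≠ 0) :
    ∃ i : ℕ,
      ¬ (∀ x ∈ quotPiece abdallahIdeal₂ i, π l * x = 0 → x = 0) ∧
      ¬ (∀ z ∈ quotPiece abdallahIdeal₂ (i + 1),
          ∃ x ∈ quotPiece abdallahIdeal₂ i, π l * x = z) := by
  refine ⟨2, fun h => hky ?_, fun h => hky ?_⟩
  · rw [h _ (mk_mem_quotPiece hk) hlk, zero_mul]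
  · obtain ⟨x, -, hx⟩ := h _ (mk_mem_quotPiece hy)
    rw [← hx]
    linear_combination x * hlk

lemma linear_form_eq {l : MvPolynomial (Fin 4) ℚ} (hl : l ∈ homogeneousSubmodule (Fin 4) ℚ 1) :
    ∃ p q r s : ℚ, l = C p * X 0 + C q * X 1 + C r * X 2 + C s * X 3 := by
  rw [homogeneousSubmodule_one_eq_span_X, Submodule.mem_span_range_iff_exists_fun] at hl
  obtain ⟨c, rfl⟩ := hl
  exact ⟨c 0, c 1, c 2, c 3, by simp [Fin.sum_univ_four, smul_eq_C_mul]⟩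

lemma isHomogeneous_C_mul_X_mul_X (t : ℚ) (i j : Fin 4) :
    (C t * (X i * X j) : MvPolynomial (Fin 4) ℚ).IsHomogeneous 2 :=
  ((isHomogeneous_X ℚ i).mul (isHomogeneous_X ℚ j)).C_mul t

/-- the second ideal of Abdallah et al. is Artinian and fails WLP. -/
theorem abdallah_second_ideal_fails_WLP :
    (∃ N : ℕ, ∀ i ≥ N, quotPiece abdallahIdeal₂ i = ⊥) ∧
    ∀ l ∈ homogeneousSubmodule (Fin 4) ℚ 1, ∃ i : ℕ,
      ¬ (∀ x ∈ quotPiece abdallahIdeal₂ i,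
          Ideal.Quotient.mk abdallahIdeal₂ l * x = 0 → x = 0) ∧
      ¬ (∀ y ∈ quotPiece abdallahIdeal₂ (i + 1),
          ∃ x ∈ quotPiece abdallahIdeal₂ i,
            Ideal.Quotient.mk abdallahIdeal₂ l * x = y) := by
  refine ⟨⟨13, fun i hi => quotPiece_eq_bot hi⟩, fun l hl => ?_⟩
  obtain ⟨p, q, r, s, rfl⟩ := linear_form_eq hl
  obtain ⟨ad, aa, cdd, bdd, bbd, acc, abb, c4, b4, -⟩ := relations
  have socle_ne {t : ℚ} (ht : t ≠ 0) :
      π (C t) * (π (X 0) * π (X 1) ^ 3 * π (X 2)) ≠ 0 := fun h =>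
    ht (eq_zero_of_C_mul_mem (Ideal.Quotient.eq_zero_iff_mem.1 (by simpa using h)))
  by_cases hqr : q = 0 ∧ r = 0
  · obtain ⟨rfl, rfl⟩ := hqr
    refine fails_of_witness (k := X 0 * X 1) (y := X 1 ^ 2 * X 2)
      ((isHomogeneous_X ℚ 0).mul (isHomogeneous_X ℚ 1))
      ((isHomogeneous_X_pow 1 2).mul (isHomogeneous_X ℚ 2)) ?_ fun h => ?_
    · simp only [map_add, map_mul, map_zero]
      linear_combination π (C p) * π (X 1) * aa + π (C s) * π (X 1) * ad
    · refine socle_ne one_ne_zero ?_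
      simp only [map_mul, map_pow, map_one] at h ⊢
      linear_combination h
  · have hk : (C (q * r ^ 2) * (X 0 * X 1) + C (-r ^ 3) * (X 0 * X 2) + C (q ^ 3) * (X 1 * X 3)
        + C (-(q ^ 2 * r)) * (X 2 * X 3) : MvPolynomial (Fin 4) ℚ).IsHomogeneous 2 :=
      (((isHomogeneous_C_mul_X_mul_X _ _ _).add (isHomogeneous_C_mul_X_mul_X _ _ _)).add
        (isHomogeneous_C_mul_X_mul_X _ _ _)).add (isHomogeneous_C_mul_X_mul_X _ _ _)
    have hlk : π (C p * X 0 + C q * X 1 + C r * X 2 + C s * X 3) *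
        π (C (q * r ^ 2) * (X 0 * X 1) + C (-r ^ 3) * (X 0 * X 2) + C (q ^ 3) * (X 1 * X 3)
          + C (-(q ^ 2 * r)) * (X 2 * X 3)) = 0 := by
      simp only [map_add, map_mul, map_pow, map_neg]
      generalize π (C p) = P, π (C q) = Q, π (C r) = R, π (C s) = S at *
      linear_combination P * (Q * R ^ 2 * π (X 1) - R ^ 3 * π (X 2)) * aa
        + P * (Q ^ 3 * π (X 1) - Q ^ 2 * R * π (X 2)) * ad
        + S * (Q * R ^ 2 * π (X 1) - R ^ 3 * π (X 2)) * ad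
        + S * Q ^ 3 * bdd - S * Q ^ 2 * R * cdd
        + Q ^ 2 * R ^ 2 * abb + Q ^ 4 * bbd - R ^ 4 * acc
    by_cases hr : r = 0
    · have hq : q ≠ 0 := fun hq => hqr ⟨hq, hr⟩
      refine fails_of_witness hk (isHomogeneous_X_pow 2 3) hlk fun h => ?_
      refine socle_ne (pow_ne_zero 3 hq) ?_
      subst hr
      simp only [map_add, map_mul, map_pow, map_neg, map_zero] at h ⊢
      -- `k c³ = q³ bc³d`, and `bc · (ab² - c²d) = 0` turns `bc³d` into `ab³c`.
      linear_combination h + π (C q) ^ 3 * π (X 1) * π (X 2) * abb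
    · refine fails_of_witness hk (isHomogeneous_X_pow 1 3) hlk fun h => ?_
      refine socle_ne (neg_ne_zero.2 (pow_ne_zero 3 hr)) ?_
      simp only [map_add, map_mul, map_pow, map_neg] at h ⊢
      -- In `k b³` the terms `ab⁴`, `b⁴d` and `b³cd` vanish.
      linear_combination h - π (C q) * π (C r) ^ 2 * π (X 0) * b4
        - π (C q) ^ 3 * π (X 3) * b4
        + π (C q) ^ 2 * π (C r) * π (X 1) * π (X 2) * bbd
end

section
/- Let K be a field of characteristic 0 and let I ⊆ K[x,y] be a homogeneous ideal such that A = K[x,y]/I is Artinian. Then A has the Weak Lefschetz Property: there exists a linear form l ∈ A_1 such that the multiplication map ·l : A_i → A_{i+1} has full rank for every i ≥ 0. -/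
/-!
If `I` contains no nonzero form of positive degree, multiplication by any nonzero linear form is
injective in every degree. Otherwise let `s + 1` be the least positive degree of a nonzero form
`f ∈ I`. As `K` is infinite, some point `(a, b)` with `a ≠ 0` has `f (a, b) ≠ 0`; take
`l = a y - b x`, a linear form which does not divide `f`.

* For `i + 1 < s + 1`, the ideal has no nonzero form of degree `i + 1`, so multiplication by `l`
  is injective on `A_i`.
* Modulo `l` every form of degree `n + 1` is a multiple of `x ^ (n + 1)`
  (`exists_eq_C_mul_X_pow_add`). For `f` the coefficient is nonzero, so `x ^ (s + 1) ∈ I + (l)`;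
  hence all forms of degree `i + 1 ≥ s + 1` lie in `I + (l)`, which is surjectivity.
-/

open MvPolynomial

/-- `I` is a homogeneous ideal: all homogeneous components of its members lie in `I`. -/
def IsHomogeneousIdeal {K : Type} [Field K] {σ : Type} (I : Ideal (MvPolynomial σ K)) : Prop :=
  ∀ g ∈ I, ∀ i : ℕ, homogeneousComponent i g ∈ I

/-- Since `a X₁ ≡ b X₀` modulo `a X₁ - b X₀`, every form of degree `n + 1` is, modulo
this linear form, a multiple of `X₀ ^ (n + 1)`, with homogeneous quotient. -/
lemma exists_eq_C_mul_X_pow_add {K : Type} [Field K] {a b : K} (ha : a ≠ 0) {n : ℕ}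
    {g : MvPolynomial (Fin 2) K} (hg : g.IsHomogeneous (n + 1)) :
    ∃ (c : K) (q : MvPolynomial (Fin 2) K), q.IsHomogeneous n ∧
      g = C c * X 0 ^ (n + 1) + (C a * X 1 - C b * X 0) * q := by
  -- the case of the monomials `X₀ ^ i X₁ ^ j`, by induction on `j`
  have mono : ∀ j i : ℕ, i + j = n + 1 → ∃ (c : K) (q : MvPolynomial (Fin 2) K),
      q.IsHomogeneous n ∧
      X 0 ^ i * X 1 ^ j = C c * X 0 ^ (n + 1) + (C a * X 1 - C b * X 0) * q := by
    intro j
    induction j with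
    | zero =>
      intro i hi
      refine ⟨1, 0, isHomogeneous_zero _ _ _, ?_⟩
      obtain rfl : i = n + 1 := by omega
      simp
    | succ j ih =>
      intro i hi
      obtain ⟨c, q, hq, h⟩ := ih (i + 1) (by omega)
      refine ⟨a⁻¹ * b * c, C a⁻¹ * (X 0 ^ i * X 1 ^ j) + C (a⁻¹ * b) * q, ?_, ?_⟩
      · refine IsHomogeneous.add (IsHomogeneous.C_mul ?_ _) (hq.C_mul _)
        have := (isHomogeneous_X_pow (R := K) (0 : Fin 2) i).mul
          (isHomogeneous_X_pow (R := K) (1 : Fin 2) j)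
        rwa [show i + j = n by omega] at this
      · have hC : (C a : MvPolynomial (Fin 2) K) * C a⁻¹ = 1 := by
          rw [← C_mul, mul_inv_cancel₀ ha, C_1]
        simp only [C_mul]
        linear_combination (C a⁻¹ * C b) * h - (X 0 ^ i * X 1 ^ (j + 1)) * hC
  have sum : ∀ t : Finset (Fin 2 →₀ ℕ), t ⊆ g.support →
      ∃ (c : K) (q : MvPolynomial (Fin 2) K), q.IsHomogeneous n ∧
      ∑ d ∈ t, monomial d (g.coeff d) =
        C c * X 0 ^ (n + 1) + (C a * X 1 - C b * X 0) * q := by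
    intro t
    induction t using Finset.induction_on with
    | empty => exact fun _ => ⟨0, 0, isHomogeneous_zero _ _ _, by simp⟩
    | insert d t hd ih =>
      intro ht
      obtain ⟨c, q, hq, h⟩ := ih ((Finset.subset_insert _ _).trans ht)
      have hdeg : d 0 + d 1 = n + 1 := by
        have := hg (mem_support_iff.mp (ht (Finset.mem_insert_self _ _)))
        simpa [Finsupp.weight_apply, Finsupp.sum_fintype] using this
      obtain ⟨c', q', hq', h'⟩ := mono (d 1) (d 0) hdeg
      refine ⟨g.coeff d * c' + c, C (g.coeff d) * q' + q, (hq'.C_mul _).add hq, ?_⟩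
      have hm : monomial d (g.coeff d) = C (g.coeff d) * (X 0 ^ d 0 * X 1 ^ d 1) := by
        rw [monomial_eq, Finsupp.prod_fintype _ _ (by simp)]
        simp
      rw [Finset.sum_insert hd, h, hm, h']
      simp only [C_mul, C_add]
      ring
  obtain ⟨c, q, hq, h⟩ := sum g.support subset_rfl
  exact ⟨c, q, hq, g.as_sum.trans h⟩

lemma isHomogeneous_linear {K : Type} [Field K] (a b : K) :
    (C a * X 1 - C b * X 0 : MvPolynomial (Fin 2) K).IsHomogeneous 1 :=
  ((isHomogeneous_X K 1).C_mul a).sub ((isHomogeneous_X K 0).C_mul b)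

/-- If `I` has no nonzero form of degree `i + 1`, multiplication by a nonzero linear form is
injective on the degree-`i` piece. -/
lemma mul_injective_of_forall_eq_zero {K : Type} [Field K] {I : Ideal (MvPolynomial (Fin 2) K)}
    {l : MvPolynomial (Fin 2) K} (hl : l.IsHomogeneous 1) (hl0 : l ≠ 0) {i : ℕ}
    (h : ∀ f ∈ I, f.IsHomogeneous (i + 1) → f = 0) :
    ∀ x ∈ quotPiece I i, Ideal.Quotient.mk I l * x = 0 → x = 0 := by
  rintro _ ⟨g, hg, rfl⟩ hx
  have hmem : l * g ∈ I := by
    rw [← Ideal.Quotient.eq_zero_iff_mem, map_mul]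
    exact hx
  have hlg : (l * g).IsHomogeneous (i + 1) := by
    rw [add_comm]
    exact hl.mul ((mem_homogeneousSubmodule _ _).mp hg)
  have hg0 : g = 0 := (mul_eq_zero.mp (h _ hmem hlg)).resolve_left hl0
  rw [hg0, map_zero]

/-- every Artinian standard graded quotient of `K[x,y]`, `char K = 0`, has WLP. -/
theorem wlp_in_two_variables {K : Type} [Field K] [CharZero K]
    (I : Ideal (MvPolynomial (Fin 2) K)) (hIhom : IsHomogeneousIdeal I)
    (hArt : ∃ N : ℕ, ∀ i ≥ N, quotPiece I i = ⊥) :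
    ∃ l ∈ homogeneousSubmodule (Fin 2) K 1, ∀ i : ℕ,
      (∀ x ∈ quotPiece I i, Ideal.Quotient.mk I l * x = 0 → x = 0) ∨
      (∀ y ∈ quotPiece I (i + 1), ∃ x ∈ quotPiece I i, Ideal.Quotient.mk I l * x = y) := by
  classical
  by_cases hex : ∃ s : ℕ, ∃ f ∈ I, f.IsHomogeneous (s + 1) ∧ f ≠ 0
  swap
  · push Not at hex
    exact ⟨X 0, isHomogeneous_X K 0, fun i => Or.inl
      (mul_injective_of_forall_eq_zero (isHomogeneous_X K 0) (X_ne_zero 0) (hex i))⟩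
  obtain ⟨f, hfI, hf, hf0⟩ := Nat.find_spec hex
  have hmin : ∀ i < Nat.find hex, ∀ f ∈ I, f.IsHomogeneous (i + 1) → f = 0 := by
    intro i hi
    have := Nat.find_min hex hi
    push Not at this
    exact this
  generalize Nat.find hex = s at hf hmin
  -- a point off the curve `x f = 0`
  obtain ⟨p, hp⟩ : ∃ p, eval p (X 0 * f) ≠ 0 := by
    by_contra! hcon
    exact mul_ne_zero (X_ne_zero 0) hf0 (funext fun p => by rw [hcon p, map_zero])
  rw [map_mul, eval_X] at hp
  have ha : p 0 ≠ 0 := left_ne_zero_of_mul hp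
  have hl := isHomogeneous_linear (p 0) (p 1)
  have hl0 : (C (p 0) * X 1 - C (p 1) * X 0 : MvPolynomial (Fin 2) K) ≠ 0 := by
    intro h
    have := congrArg (eval ![0, 1]) h
    simp [ha] at this
  refine ⟨_, hl, fun i => ?_⟩
  rcases lt_or_ge i s with his | his
  · exact Or.inl (mul_injective_of_forall_eq_zero hl hl0 (hmin i his))
  right
  obtain ⟨k, rfl⟩ := Nat.exists_eq_add_of_le his
  obtain ⟨c, q, hq, hfeq⟩ := exists_eq_C_mul_X_pow_add (b := p 1) ha hf
  -- evaluating at `p` gives `f(p) = c a ^ (s + 1)`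
  have hc : c ≠ 0 := by
    rintro rfl
    apply right_ne_zero_of_mul hp
    rw [hfeq]
    simp [mul_comm]
  have hC : (C c : MvPolynomial (Fin 2) K) * C c⁻¹ = 1 := by
    rw [← C_mul, mul_inv_cancel₀ hc, C_1]
  rintro _ ⟨g, hg, rfl⟩
  obtain ⟨c', q', hq', hgeq⟩ := exists_eq_C_mul_X_pow_add (b := p 1) ha
    ((mem_homogeneousSubmodule _ _).mp hg)
  have hr : (q' - C (c' * c⁻¹) * (q * X 0 ^ k)).IsHomogeneous (s + k) :=
    hq'.sub ((hq.mul (isHomogeneous_X_pow 0 k)).C_mul _)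
  refine ⟨_, ⟨_, hr, rfl⟩, ?_⟩
  change Ideal.Quotient.mk I _ * Ideal.Quotient.mk I _ = Ideal.Quotient.mk I g
  rw [← map_mul, eq_comm, Ideal.Quotient.eq]
  convert I.mul_mem_left (C (c' * c⁻¹) * X 0 ^ k) hfI using 1
  rw [hgeq]
  simp only [C_mul]
  linear_combination (-(C c' * C c⁻¹ * X 0 ^ k)) * hfeq - (C c' * X 0 ^ (s + k + 1)) * hC
end

section
/- Let S = Q[x_0,x_1,x_2,x_3] and let X ⊂ P^3(Q) be the eight points with homogeneous coordinates [1:0:0:0], [0:1:0:0], [0:0:1:0], [1:1:0:0], [1:0:1:0], [0:1:1:0], [1:1:1:0], [0:0:0:1]. Let L ∈ S_1 be a linear form with L(p) ≠ 0 for every p ∈ X and x_3 ∉ (L), and set A = S/(I_X + (L)). Then A fails the Weak Lefschetz Property: for every linear form l ∈ A_1 the multiplication map ·l : A_1 → A_2 is neither injective nor surjective. -/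
/-!
Write `J = I_X + (L)`, `L = ∑ aᵢ xᵢ`; every `aᵢ` is nonzero, since the four coordinate
points lie in `X`.

*Injectivity.* The form `x₃` kills `A₁`: the products `x₃ xᵢ` (`i < 3`) vanish on `X`, and
`x₃ L ∈ J` then gives `x₃² ∈ J` because `a₃ ≠ 0`. It is nonzero in `A`: no nonzero form of degree
at most one vanishes on `X`, so a linear form in `J` vanishes on the whole plane `L = 0`,
whereas `x₃` is nonzero at the point `(a₃, 0, 0, -a₀)` of that plane.

*Surjectivity.* No conic of the plane `x₃ = 0` contains the seven coplanar points
(`eval_eq_zero_of_plane`), so a quadric in `J` vanishes wherever `x₃ = L = 0`. In that plane the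
linear forms `L` and `l` have a common nonzero zero `p`, and every quadric congruent modulo `J` to a
multiple of `l` vanishes at `p`. Hence the squares `xᵢ²` are not all in the image of `·l`.

Both parts rest on `eval_eq_zero_of_mem`, which turns membership in `J` of a form of low degree
into vanishing at a point; it is proved by restricting polynomials to the line through the point.
-/

open MvPolynomial

/-- The homogeneous vanishing ideal of a set of (affine representatives of) points of `ℙ³`. -/
noncomputable def projVanishingIdeal (Y : Set (Fin 4 → ℚ)) : Ideal (MvPolynomial (Fin 4) ℚ) :=
  Ideal.span {f | (∃ d : ℕ, f ∈ homogeneousSubmodule (Fin 4) ℚ d) ∧ ∀ p ∈ Y, eval p f = 0}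

/-- The eight points of the motivating example: seven points on the plane `x₃ = 0`
together with `[0:0:0:1]`. -/
def eightPoints : Set (Fin 4 → ℚ) :=
  {![1,0,0,0], ![0,1,0,0], ![0,0,1,0], ![1,1,0,0],
   ![1,0,1,0], ![0,1,1,0], ![1,1,1,0], ![0,0,0,1]}

lemma eval_linear {f : MvPolynomial (Fin 4) ℚ} (hf : f ∈ homogeneousSubmodule (Fin 4) ℚ 1)
    (p : Fin 4 → ℚ) :
    eval p f = p 0 * eval ![1,0,0,0] f + p 1 * eval ![0,1,0,0] f + p 2 * eval ![0,0,1,0] f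
      + p 3 * eval ![0,0,0,1] f := by
  rw [homogeneousSubmodule_one_eq_span_X] at hf
  induction hf using Submodule.span_induction with
  | mem x hx =>
    obtain ⟨i, rfl⟩ := hx
    fin_cases i <;> simp
  | zero => simp
  | add x y _ _ hx hy => simp only [map_add, hx, hy]; ring
  | smul a x _ hx => simp only [smul_eval, hx]; ring

lemma linear_eq {f : MvPolynomial (Fin 4) ℚ} (hf : f ∈ homogeneousSubmodule (Fin 4) ℚ 1) :
    f = C (eval ![1,0,0,0] f) * X 0 + C (eval ![0,1,0,0] f) * X 1
      + C (eval ![0,0,1,0] f) * X 2 + C (eval ![0,0,0,1] f) * X 3 := by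
  apply MvPolynomial.funext
  intro p
  rw [eval_linear hf p]
  simp only [map_add, map_mul, eval_C, eval_X]
  ring

/-- A quadratic form on the plane `x₃ = 0` is determined by its values at six of the seven
coplanar points. -/
lemma eval_quadric {f : MvPolynomial (Fin 4) ℚ} (hf : f ∈ homogeneousSubmodule (Fin 4) ℚ 2)
    (p : Fin 4 → ℚ) (hp : p 3 = 0) :
    eval p f = p 0 * (p 0 - p 1 - p 2) * eval ![1,0,0,0] f
      + p 1 * (p 1 - p 0 - p 2) * eval ![0,1,0,0] f
      + p 2 * (p 2 - p 0 - p 1) * eval ![0,0,1,0] f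
      + p 0 * p 1 * eval ![1,1,0,0] f + p 0 * p 2 * eval ![1,0,1,0] f
      + p 1 * p 2 * eval ![0,1,1,0] f := by
  rw [← homogeneousSubmodule_one_pow, pow_two] at hf
  induction hf using Submodule.mul_induction_on' with
  | mem_mul_mem m hm n hn =>
    have h1 := eval_linear hm
    have h2 := eval_linear hn
    simp only [map_mul]
    rw [h1 p, h2 p, h1 ![1,1,0,0], h2 ![1,1,0,0], h1 ![1,0,1,0], h2 ![1,0,1,0],
      h1 ![0,1,1,0], h2 ![0,1,1,0], hp]
    simp
    ring
  | add x _ y _ hx hy => simp only [map_add, hx, hy]; ring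

lemma eval_eq_zero_of_lt_two {f : MvPolynomial (Fin 4) ℚ} {d : ℕ} (hd : d < 2)
    (hf : f ∈ homogeneousSubmodule (Fin 4) ℚ d) (h : ∀ p ∈ eightPoints, eval p f = 0)
    (p : Fin 4 → ℚ) : eval p f = 0 := by
  interval_cases d
  · have h0 : f.totalDegree = 0 := (totalDegree_zero_iff_isHomogeneous _).2 hf
    rw [totalDegree_eq_zero_iff_eq_C] at h0
    have := h ![1,0,0,0] (by simp [eightPoints])
    rw [h0] at this ⊢
    simpa using this
  · rw [eval_linear hf p, h _ (by simp [eightPoints]), h _ (by simp [eightPoints]),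
      h _ (by simp [eightPoints]), h _ (by simp [eightPoints])]
    ring

lemma eval_eq_zero_of_plane {f : MvPolynomial (Fin 4) ℚ} {d : ℕ} (hd : d < 3)
    (hf : f ∈ homogeneousSubmodule (Fin 4) ℚ d) (h : ∀ p ∈ eightPoints, eval p f = 0)
    (p : Fin 4 → ℚ) (hp : p 3 = 0) : eval p f = 0 := by
  rcases Nat.lt_succ_iff_lt_or_eq.1 hd with hd | rfl
  · exact eval_eq_zero_of_lt_two hd hf h p
  · rw [eval_quadric hf p hp, h _ (by simp [eightPoints]), h _ (by simp [eightPoints]),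
      h _ (by simp [eightPoints]), h _ (by simp [eightPoints]), h _ (by simp [eightPoints]),
      h _ (by simp [eightPoints])]
    ring

/-- Restriction of a form to the line `t ↦ t • p`. -/
lemma aeval_line (p : Fin 4 → ℚ) {d : ℕ} {f : MvPolynomial (Fin 4) ℚ}
    (hf : f ∈ homogeneousSubmodule (Fin 4) ℚ d) :
    aeval (fun i => Polynomial.C (p i) * Polynomial.X) f
      = Polynomial.C (eval p f) * Polynomial.X ^ d := by
  rw [mem_homogeneousSubmodule] at hf
  rw [aeval_def, eval₂_eq, eval_eq, map_sum, Finset.sum_mul]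
  refine Finset.sum_congr rfl fun m hm => ?_
  have hdeg : ∑ i ∈ m.support, m i = d := hf.degree_eq_sum_deg_support hm |>.symm
  simp only [mul_pow, Finset.prod_mul_distrib, Finset.prod_pow_eq_pow_sum, hdeg, map_mul, map_prod,
    map_pow, Polynomial.algebraMap_eq]
  ring

/-- If `L p = 0` and all forms of degree `< n` in `I_X` vanish at `p`, then so do all forms of
degree `< n` in `I_X + (L)`: restricted to the line `t ↦ t • p`, that ideal lands in `(tⁿ)`. -/
lemma eval_eq_zero_of_mem {L : MvPolynomial (Fin 4) ℚ}
    (hL : L ∈ homogeneousSubmodule (Fin 4) ℚ 1) {p : Fin 4 → ℚ} (hp : eval p L = 0) {n : ℕ}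
    (hn : ∀ d < n, ∀ f ∈ homogeneousSubmodule (Fin 4) ℚ d,
      (∀ q ∈ eightPoints, eval q f = 0) → eval p f = 0)
    {d : ℕ} (hd : d < n) {f : MvPolynomial (Fin 4) ℚ}
    (hf : f ∈ homogeneousSubmodule (Fin 4) ℚ d)
    (hfJ : f ∈ projVanishingIdeal eightPoints + Ideal.span {L}) : eval p f = 0 := by
  let φ : MvPolynomial (Fin 4) ℚ →ₐ[ℚ] Polynomial ℚ :=
    aeval (fun i => Polynomial.C (p i) * Polynomial.X)
  have hJ : projVanishingIdeal eightPoints + Ideal.span {L}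
      ≤ (Ideal.span {(Polynomial.X : Polynomial ℚ) ^ n}).comap φ := by
    refine sup_le (Ideal.span_le.2 ?_) (Ideal.span_le.2 ?_)
    · rintro g ⟨⟨e, he⟩, hg⟩
      simp only [SetLike.mem_coe, Ideal.mem_comap, Ideal.mem_span_singleton, φ, aeval_line p he]
      by_cases hen : e < n
      · simp [hn e hen g he hg]
      · exact Dvd.dvd.mul_left (pow_dvd_pow _ (not_lt.1 hen)) _
    · rintro g rfl
      simp only [SetLike.mem_coe, Ideal.mem_comap, Ideal.mem_span_singleton, φ, aeval_line p hL, hp]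
      simp
  have h := hJ hfJ
  simp only [Ideal.mem_comap, Ideal.mem_span_singleton, φ, aeval_line p hf] at h
  have h2 := Polynomial.X_pow_dvd_iff.1 h d hd
  simpa using h2

lemma X_three_mul_mem {L : MvPolynomial (Fin 4) ℚ} (hL : L ∈ homogeneousSubmodule (Fin 4) ℚ 1)
    (hL3 : eval ![0,0,0,1] L ≠ 0) {l : MvPolynomial (Fin 4) ℚ}
    (hl : l ∈ homogeneousSubmodule (Fin 4) ℚ 1) :
    l * X 3 ∈ projVanishingIdeal eightPoints + Ideal.span {L} := by
  set J := projVanishingIdeal eightPoints + Ideal.span {L}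
  have key : ∀ i : Fin 4, i ≠ 3 → (X i * X 3 : MvPolynomial (Fin 4) ℚ) ∈ J := by
    intro i hi
    refine Ideal.mem_sup_left (Ideal.subset_span ⟨⟨2, ?_⟩, ?_⟩)
    · exact (isHomogeneous_X ℚ i).mul (isHomogeneous_X ℚ 3)
    · intro p hp
      simp only [eightPoints, Set.mem_insert_iff, Set.mem_singleton_iff] at hp
      rcases hp with rfl | rfl | rfl | rfl | rfl | rfl | rfl | rfl <;> fin_cases i <;> simp_all
  have h0 := key 0 (by decide)
  have h1 := key 1 (by decide)
  have h2 := key 2 (by decide)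
  have hLJ : L * X 3 ∈ J :=
    J.mul_mem_right _ (Ideal.mem_sup_right (Ideal.mem_span_singleton_self L))
  have h3 : (X 3 * X 3 : MvPolynomial (Fin 4) ℚ) ∈ J := by
    have hsum := J.mul_mem_left (C (eval ![0,0,0,1] L)⁻¹) (J.sub_mem hLJ
      (J.add_mem (J.add_mem (J.mul_mem_left (C (eval ![1,0,0,0] L)) h0)
        (J.mul_mem_left (C (eval ![0,1,0,0] L)) h1)) (J.mul_mem_left (C (eval ![0,0,1,0] L)) h2)))
    have hinv : (C (eval ![0,0,0,1] L)⁻¹ * C (eval ![0,0,0,1] L) : MvPolynomial (Fin 4) ℚ) = 1 := by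
      rw [← C_mul, inv_mul_cancel₀ hL3, C_1]
    convert! hsum using 1
    linear_combination (-X 3 * X 3) * hinv
      - (C (eval ![0,0,0,1] L)⁻¹ * X 3 : MvPolynomial (Fin 4) ℚ) * linear_eq hL
  have hsum := J.add_mem (J.add_mem (J.add_mem (J.mul_mem_left (C (eval ![1,0,0,0] l)) h0)
    (J.mul_mem_left (C (eval ![0,1,0,0] l)) h1)) (J.mul_mem_left (C (eval ![0,0,1,0] l)) h2))
    (J.mul_mem_left (C (eval ![0,0,0,1] l)) h3)
  convert! hsum using 1
  linear_combination (X 3 : MvPolynomial (Fin 4) ℚ) * linear_eq hl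

/-- Two linear forms have a common nonzero zero with `x₃ = 0`: the cross product of their
coefficient vectors, or, if they are proportional there, a zero of `L`. -/
lemma exists_common_zero {L l : MvPolynomial (Fin 4) ℚ}
    (hL : L ∈ homogeneousSubmodule (Fin 4) ℚ 1) (hl : l ∈ homogeneousSubmodule (Fin 4) ℚ 1)
    (hL0 : eval ![1,0,0,0] L ≠ 0) :
    ∃ p : Fin 4 → ℚ, p 3 = 0 ∧ eval p L = 0 ∧ eval p l = 0 ∧ ∃ i, p i ≠ 0 := by
  have hL' := eval_linear hL
  have hl' := eval_linear hl
  generalize eval ![1,0,0,0] L = a0 at *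
  generalize eval ![0,1,0,0] L = a1 at *
  generalize eval ![0,0,1,0] L = a2 at *
  generalize eval ![1,0,0,0] l = b0 at *
  generalize eval ![0,1,0,0] l = b1 at *
  generalize eval ![0,0,1,0] l = b2 at *
  by_cases h : ∃ i, ![a1*b2-a2*b1, a2*b0-a0*b2, a0*b1-a1*b0, 0] i ≠ 0
  · refine ⟨_, by simp, ?_, ?_, h⟩
    · rw [hL']; simp; ring
    · rw [hl']; simp; ring
  · push Not at h
    have h2 : a0*b1-a1*b0 = 0 := by simpa using h 2
    refine ⟨![a1, -a0, 0, 0], by simp, ?_, ?_, 1, by simpa using hL0⟩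
    · rw [hL']; simp; ring
    · rw [hl']; simp; linarith

/-- the Artinian reduction of the eight points fails WLP
from degree 1 to degree 2. -/
theorem eight_points_fail_WLP
    (L : MvPolynomial (Fin 4) ℚ) (hL : L ∈ homogeneousSubmodule (Fin 4) ℚ 1)
    (hLX : ∀ p ∈ eightPoints, eval p L ≠ 0)
    (hx3L : (X 3 : MvPolynomial (Fin 4) ℚ) ∉ Ideal.span {L}) :
    ∀ l ∈ homogeneousSubmodule (Fin 4) ℚ 1,
      ¬ (∀ x ∈ quotPiece (projVanishingIdeal eightPoints + Ideal.span {L}) 1,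
          Ideal.Quotient.mk (projVanishingIdeal eightPoints + Ideal.span {L}) l * x = 0 →
            x = 0) ∧
      ¬ (∀ y ∈ quotPiece (projVanishingIdeal eightPoints + Ideal.span {L}) 2,
          ∃ x ∈ quotPiece (projVanishingIdeal eightPoints + Ideal.span {L}) 1,
            Ideal.Quotient.mk (projVanishingIdeal eightPoints + Ideal.span {L}) l * x = y) := by
  intro l hl
  have hL0 : eval ![1,0,0,0] L ≠ 0 := hLX _ (by simp [eightPoints])
  have hL3 : eval ![0,0,0,1] L ≠ 0 := hLX _ (by simp [eightPoints])
  constructor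
  · intro h
    have hx := h (Ideal.Quotient.mk _ (X 3)) ⟨X 3, isHomogeneous_X ℚ 3, rfl⟩ (by
      rw [← map_mul, Ideal.Quotient.eq_zero_iff_mem]
      exact X_three_mul_mem hL hL3 hl)
    rw [Ideal.Quotient.eq_zero_iff_mem] at hx
    have hq : eval ![eval ![0,0,0,1] L, 0, 0, -eval ![1,0,0,0] L] L = 0 := by
      rw [eval_linear hL]; simp; ring
    have := eval_eq_zero_of_mem (n := 2) hL hq
      (fun d hd f hf hfX => eval_eq_zero_of_lt_two hd hf hfX _) (d := 1) (by norm_num)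
      (isHomogeneous_X ℚ 3) hx
    simp at this
    exact hL0 this
  · intro h
    obtain ⟨p, hp3, hpL, hpl, i, hi⟩ := exists_common_zero hL hl hL0
    have hX2 : (X i ^ 2 : MvPolynomial (Fin 4) ℚ) ∈ homogeneousSubmodule (Fin 4) ℚ 2 :=
      isHomogeneous_X_pow i 2
    obtain ⟨x, ⟨m, hm, rfl⟩, hmx⟩ := h (Ideal.Quotient.mk _ (X i ^ 2)) ⟨X i ^ 2, hX2, rfl⟩
    have hmem : l * m - X i ^ 2 ∈ projVanishingIdeal eightPoints + Ideal.span {L} := by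
      rw [← Ideal.Quotient.eq_zero_iff_mem, map_sub, map_mul, sub_eq_zero]
      exact hmx
    have := eval_eq_zero_of_mem (n := 3) hL hpL
      (fun d hd f hf hfX => eval_eq_zero_of_plane hd hf hfX p hp3) (d := 2) (by norm_num)
      (Submodule.sub_mem _ (IsHomogeneous.mul hl hm) hX2) hmem
    simp [hpl] at this
    exact hi this
end
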